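/- Let 0 < θ ≤ π/4, let a, b ∈ M_3(ℂ) be positive semidefinite with ⟨ψ_i, (a⊗b) ψ_i⟩ ≠ 0 for each of the nine states ψ_i of S_3(θ), and let δ be the disturbance of a⊗b on S_3(θ). If a_{11} ≥ (1/s)·‖a‖_∞ and b_{11} ≥ (1/s)·‖b‖_∞ for some s > 0, then ‖(a⊗b)/tr(a⊗b) − I/9‖_max ≤ 8(1+√2·s)·δ/sin 2θ. -/

import Mathlib

open Matrix Kronecker
open scoped ComplexOrder

/-- The disturbance `δ` of the product operator `a ⊗ b` on the family of states `ψ`. -/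
noncomputable def disturbance {n dA dB : ℕ} (ψ : Fin n → Fin dA × Fin dB → ℂ)
    (a : Matrix (Fin dA) (Fin dA) ℂ) (b : Matrix (Fin dB) (Fin dB) ℂ) : ℝ :=
  ⨆ p : {q : Fin n × Fin n // q.1 ≠ q.2},
    ‖star (ψ p.1.1) ⬝ᵥ (a ⊗ₖ b).mulVec (ψ p.1.2)‖ /
      Real.sqrt ((star (ψ p.1.1) ⬝ᵥ (a ⊗ₖ b).mulVec (ψ p.1.1)).re *
        (star (ψ p.1.2) ⬝ᵥ (a ⊗ₖ b).mulVec (ψ p.1.2)).re)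

/-- The standard basis vector `|i⟩` of `ℂ³`. -/
noncomputable def e3 (i : Fin 3) : Fin 3 → ℂ := fun k => if k = i then 1 else 0

/-- The product vector `α ⊗ β` in `ℂ³ ⊗ ℂ³`. -/
noncomputable def kp (α β : Fin 3 → ℂ) : Fin 3 × Fin 3 → ℂ := fun p => α p.1 * β p.2

/-- The nine rotated domino states `S₃(θ₁,θ₂,θ₃,θ₄)` in `ℂ³ ⊗ ℂ³`. -/
noncomputable def rotDomino (t1 t2 t3 t4 : ℝ) : Fin 9 → Fin 3 × Fin 3 → ℂ :=
  ![kp (e3 1) (e3 1),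
    kp (e3 0) (fun k => (Real.cos t1 : ℂ) * e3 0 k + (Real.sin t1 : ℂ) * e3 1 k),
    kp (e3 0) (fun k => -(Real.sin t1 : ℂ) * e3 0 k + (Real.cos t1 : ℂ) * e3 1 k),
    kp (e3 2) (fun k => (Real.cos t2 : ℂ) * e3 1 k + (Real.sin t2 : ℂ) * e3 2 k),
    kp (e3 2) (fun k => -(Real.sin t2 : ℂ) * e3 1 k + (Real.cos t2 : ℂ) * e3 2 k),
    kp (fun k => (Real.cos t3 : ℂ) * e3 1 k + (Real.sin t3 : ℂ) * e3 2 k) (e3 0),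
    kp (fun k => -(Real.sin t3 : ℂ) * e3 1 k + (Real.cos t3 : ℂ) * e3 2 k) (e3 0),
    kp (fun k => (Real.cos t4 : ℂ) * e3 0 k + (Real.sin t4 : ℂ) * e3 1 k) (e3 2),
    kp (fun k => -(Real.sin t4 : ℂ) * e3 0 k + (Real.cos t4 : ℂ) * e3 1 k) (e3 2)]

/-- The operator (spectral) norm of a square complex matrix. -/
noncomputable def opNorm {n : ℕ} (M : Matrix (Fin n) (Fin n) ℂ) : ℝ :=
  ‖Matrix.toEuclideanCLM (𝕜 := ℂ) M‖

/-- The largest absolute value of an entry of a matrix. -/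
noncomputable def maxEntry {m n : Type*} [Fintype m] [Fintype n] (M : Matrix m n ℂ) : ℝ :=
  ⨆ p : m × n, ‖M p.1 p.2‖

/-! If `x` is fixed and a domino pair `u` on the other side has `|1⟩ = ∑ pₖ uₖ` with normalised
coefficients, then Cauchy–Schwarz turns the overlaps of the product states `x ⊗ uₖ` with the other
states into a bound on matrix entries of one factor; the loss is `∑ ⟨uₖ, b uₖ⟩ ≤ 2s ⟨1|b|1⟩`. This
makes the off-diagonal entries of `a` small. The overlap of the two states of a domino pair
`|0⟩, |1⟩` rotated by `t` contains `sin 2t (a₁₁ - a₀₀) / 2`, so adjacent diagonal entries differ by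
little as well, up to a factor `1 / |sin 2t|`. Hence `A = a / tr a` and `B = b / tr b` are both
close to `I/3`, and `A ⊗ B - I/9 = A ⊗ (B - I/3) + (A - I/3) ⊗ I/3`. -/

section SesqForm

variable {ι κ μ : Type*} [Fintype ι] [Fintype κ] [Fintype μ]

/-- The sesquilinear form `⟨x, M y⟩`, antilinear in `x`. -/
def sesqForm (M : Matrix ι ι ℂ) (x y : ι → ℂ) : ℂ := star x ⬝ᵥ M *ᵥ y

theorem sesqForm_sum_smul (M : Matrix ι ι ℂ) (p : κ → ℂ) (φ : κ → ι → ℂ) (q : μ → ℂ)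
    (ψ : μ → ι → ℂ) :
    sesqForm M (∑ k, p k • φ k) (∑ l, q l • ψ l) =
      ∑ k, ∑ l, star (p k) * q l * sesqForm M (φ k) (ψ l) := by
  simp only [sesqForm, star_sum, star_smul, mulVec_sum, mulVec_smul, sum_dotProduct,
    dotProduct_sum, smul_dotProduct, dotProduct_smul, smul_eq_mul, Finset.mul_sum, mul_assoc,
    mul_left_comm]
  exact Finset.sum_comm

theorem sesqForm_single [DecidableEq ι] (M : Matrix ι ι ℂ) (i j : ι) :
    sesqForm M (Pi.single i 1) (Pi.single j 1) = M i j := by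
  simp [sesqForm, Pi.star_single]

theorem sesqForm_self_nonneg {M : Matrix ι ι ℂ} (hM : M.PosSemidef) (x : ι → ℂ) :
    0 ≤ sesqForm M x x :=
  hM.dotProduct_mulVec_nonneg x

theorem re_sesqForm_self_nonneg {M : Matrix ι ι ℂ} (hM : M.PosSemidef) (x : ι → ℂ) :
    0 ≤ (sesqForm M x x).re :=
  (Complex.nonneg_iff.1 (sesqForm_self_nonneg hM x)).1

theorem re_sesqForm_self_pos {M : Matrix ι ι ℂ} (hM : M.PosSemidef) {x : ι → ℂ}
    (hx : sesqForm M x x ≠ 0) : 0 < (sesqForm M x x).re :=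
  (Complex.pos_iff.1 ((sesqForm_self_nonneg hM x).lt_of_ne' hx)).1

theorem sesqForm_kp (a b : Matrix (Fin 3) (Fin 3) ℂ) (x y x' y' : Fin 3 → ℂ) :
    sesqForm (a ⊗ₖ b) (kp x y) (kp x' y') = sesqForm a x x' * sesqForm b y y' := by
  simp only [sesqForm, kp, dotProduct, mulVec, Fintype.sum_prod_type, kroneckerMap_apply,
    Fin.sum_univ_three, Pi.star_apply, star_mul']
  ring

theorem re_sesqForm_kp_self {a b : Matrix (Fin 3) (Fin 3) ℂ} (ha : a.PosSemidef)
    (x y : Fin 3 → ℂ) :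
    (sesqForm (a ⊗ₖ b) (kp x y) (kp x y)).re =
      (sesqForm a x x).re * (sesqForm b y y).re := by
  rw [sesqForm_kp, Complex.mul_re, ← (Complex.nonneg_iff.1 (sesqForm_self_nonneg ha x)).2,
    zero_mul, sub_zero]

end SesqForm

section PosSemidef

variable {ι : Type*} {M : Matrix ι ι ℂ}

theorem re_diag_nonneg (hM : M.PosSemidef) (i : ι) : 0 ≤ (M i i).re :=
  (Complex.nonneg_iff.1 hM.diag_nonneg).1

theorem re_diag_add_re_diag_nonneg (hM : M.PosSemidef) (i j : ι) :
    0 ≤ (M i i).re + (M j j).re :=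
  add_nonneg (re_diag_nonneg hM i) (re_diag_nonneg hM j)

theorem ofReal_re_diag (hM : M.PosSemidef) (i : ι) : ((M i i).re : ℂ) = M i i :=
  hM.isHermitian.coe_re_apply_self i

theorem norm_apply_comm (hM : M.PosSemidef) (i j : ι) : ‖M i j‖ = ‖M j i‖ := by
  rw [← hM.isHermitian.apply i j, norm_star]

theorem norm_apply_sq_le (hM : M.PosSemidef) (i j : ι) :
    ‖M i j‖ ^ 2 ≤ (M i i).re * (M j j).re := by
  have hdet := (hM.submatrix ![i, j]).det_nonneg
  simp only [det_fin_two, submatrix_apply, cons_val_zero, cons_val_one] at hdet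
  rw [← hM.isHermitian.apply j i, ← ofReal_re_diag hM i, ← ofReal_re_diag hM j,
    RCLike.star_def, Complex.mul_conj'] at hdet
  have : 0 ≤ (M i i).re * (M j j).re - ‖M i j‖ ^ 2 := by exact_mod_cast hdet
  linarith

variable [Fintype ι]

theorem ofReal_re_trace (hM : M.PosSemidef) : (M.trace.re : ℂ) = M.trace := by
  simp only [Matrix.trace, diag_apply, Complex.re_sum, Complex.ofReal_sum, ofReal_re_diag hM]

theorem re_diag_le_re_trace (hM : M.PosSemidef) (i : ι) : (M i i).re ≤ M.trace.re := by
  rw [Matrix.trace, Complex.re_sum]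
  exact Finset.single_le_sum (f := fun k => (M k k).re) (fun k _ => re_diag_nonneg hM k)
    (Finset.mem_univ i)

theorem norm_apply_le_re_trace (hM : M.PosSemidef) (i j : ι) : ‖M i j‖ ≤ M.trace.re := by
  have htr := (re_diag_nonneg hM i).trans (re_diag_le_re_trace hM i)
  refine le_of_sq_le_sq ?_ htr
  calc ‖M i j‖ ^ 2 ≤ (M i i).re * (M j j).re := norm_apply_sq_le hM i j
    _ ≤ M.trace.re * M.trace.re :=
        mul_le_mul (re_diag_le_re_trace hM i) (re_diag_le_re_trace hM j) (re_diag_nonneg hM j) htr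
    _ = M.trace.re ^ 2 := (sq _).symm

end PosSemidef

theorem re_diag_le_opNorm {n : ℕ} (M : Matrix (Fin n) (Fin n) ℂ) (i : Fin n) :
    (M i i).re ≤ opNorm M := by
  let e : EuclideanSpace ℂ (Fin n) := EuclideanSpace.single i 1
  have he : ‖e‖ = 1 := by simp [e]
  have hinner : inner ℂ e (toEuclideanCLM (𝕜 := ℂ) M e) = M i i := by
    simp [e, EuclideanSpace.inner_single_left]
  calc (M i i).re ≤ ‖M i i‖ := Complex.re_le_norm _
    _ ≤ ‖e‖ * ‖toEuclideanCLM (𝕜 := ℂ) M e‖ := hinner ▸ norm_inner_le_norm _ _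
    _ ≤ opNorm M := by simpa [he, opNorm] using (toEuclideanCLM (𝕜 := ℂ) M).le_opNorm e

section MaxEntry

variable {m n m' n' : Type*} [Fintype m] [Fintype n] [Fintype m'] [Fintype n']

theorem norm_apply_le_maxEntry (M : Matrix m n ℂ) (i : m) (j : n) : ‖M i j‖ ≤ maxEntry M :=
  le_ciSup (f := fun p : m × n => ‖M p.1 p.2‖) (Set.finite_range _).bddAbove (i, j)

theorem maxEntry_nonneg (M : Matrix m n ℂ) : 0 ≤ maxEntry M :=
  Real.iSup_nonneg fun _ => norm_nonneg _

theorem maxEntry_le {M : Matrix m n ℂ} {r : ℝ} (hr : 0 ≤ r) (h : ∀ i j, ‖M i j‖ ≤ r) :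
    maxEntry M ≤ r :=
  Real.iSup_le (fun p => h p.1 p.2) hr

theorem maxEntry_add_le (M N : Matrix m n ℂ) : maxEntry (M + N) ≤ maxEntry M + maxEntry N :=
  maxEntry_le (add_nonneg (maxEntry_nonneg M) (maxEntry_nonneg N)) fun i j =>
    (norm_add_le _ _).trans
      (add_le_add (norm_apply_le_maxEntry M i j) (norm_apply_le_maxEntry N i j))

theorem maxEntry_kronecker_le (M : Matrix m n ℂ) (N : Matrix m' n' ℂ) :
    maxEntry (M ⊗ₖ N) ≤ maxEntry M * maxEntry N := by
  refine maxEntry_le (mul_nonneg (maxEntry_nonneg M) (maxEntry_nonneg N)) fun p q => ?_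
  rw [kroneckerMap_apply, norm_mul]
  exact mul_le_mul (norm_apply_le_maxEntry M _ _) (norm_apply_le_maxEntry N _ _) (norm_nonneg _)
    (maxEntry_nonneg M)

theorem maxEntry_trace_inv_smul_le_one {M : Matrix n n ℂ} (hM : M.PosSemidef) :
    maxEntry (M.trace⁻¹ • M) ≤ 1 := by
  refine maxEntry_le zero_le_one fun i j => ?_
  rw [Matrix.smul_apply, smul_eq_mul, norm_mul, norm_inv, ← ofReal_re_trace hM,
    Complex.norm_of_nonneg ((norm_nonneg _).trans (norm_apply_le_re_trace hM i j))]
  exact inv_mul_le_one_of_le₀ (norm_apply_le_re_trace hM i j)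
    ((norm_nonneg _).trans (norm_apply_le_re_trace hM i j))

theorem maxEntry_smul_one_le [DecidableEq n] (c : ℂ) :
    maxEntry (c • (1 : Matrix n n ℂ)) ≤ ‖c‖ := by
  refine maxEntry_le (norm_nonneg c) fun i j => ?_
  rw [Matrix.smul_apply, one_apply]
  split_ifs <;> simp

theorem maxEntry_kronecker_sub_one_le [DecidableEq m] [DecidableEq n] {A : Matrix m m ℂ}
    {B : Matrix n n ℂ} {α β : ℂ} {K : ℝ} (hA : maxEntry A ≤ 1)
    (hAK : maxEntry (A - α • (1 : Matrix m m ℂ)) ≤ K)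
    (hBK : maxEntry (B - β • (1 : Matrix n n ℂ)) ≤ K) :
    maxEntry (A ⊗ₖ B - (α * β) • (1 : Matrix (m × n) (m × n) ℂ)) ≤ (1 + ‖β‖) * K := by
  have hK : 0 ≤ K := (maxEntry_nonneg _).trans hAK
  have hsplit : A ⊗ₖ B - (α * β) • (1 : Matrix (m × n) (m × n) ℂ) =
      A ⊗ₖ (B - β • (1 : Matrix n n ℂ)) +
        (A - α • (1 : Matrix m m ℂ)) ⊗ₖ (β • (1 : Matrix n n ℂ)) := by
    rw [← one_kronecker_one, sub_eq_add_neg, sub_eq_add_neg, sub_eq_add_neg, kronecker_add,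
      add_kronecker, ← neg_smul, ← neg_smul, ← neg_smul, smul_kronecker, kronecker_smul,
      kronecker_smul, kronecker_smul, smul_smul]
    module
  calc maxEntry (A ⊗ₖ B - (α * β) • (1 : Matrix (m × n) (m × n) ℂ))
      ≤ maxEntry A * maxEntry (B - β • (1 : Matrix n n ℂ)) +
          maxEntry (A - α • (1 : Matrix m m ℂ)) * maxEntry (β • (1 : Matrix n n ℂ)) :=
        hsplit ▸ (maxEntry_add_le _ _).trans
          (add_le_add (maxEntry_kronecker_le _ _) (maxEntry_kronecker_le _ _))
    _ ≤ 1 * K + K * ‖β‖ := by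
        gcongr
        exacts [maxEntry_nonneg _, maxEntry_nonneg _, maxEntry_smul_one_le β]
    _ = (1 + ‖β‖) * K := by ring

theorem maxEntry_trace_inv_smul_kronecker_sub_le [DecidableEq m] [DecidableEq n]
    {a : Matrix m m ℂ} {b : Matrix n n ℂ} {α β : ℂ} {K : ℝ} (ha : a.PosSemidef)
    (haK : maxEntry (a.trace⁻¹ • a - α • (1 : Matrix m m ℂ)) ≤ K)
    (hbK : maxEntry (b.trace⁻¹ • b - β • (1 : Matrix n n ℂ)) ≤ K) :
    maxEntry ((a ⊗ₖ b).trace⁻¹ • (a ⊗ₖ b) - (α * β) • (1 : Matrix (m × n) (m × n) ℂ)) ≤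
      (1 + ‖β‖) * K := by
  have h := maxEntry_kronecker_sub_one_le (maxEntry_trace_inv_smul_le_one ha) haK hbK
  rwa [smul_kronecker, kronecker_smul, smul_smul, ← mul_inv, ← trace_kronecker] at h

end MaxEntry

section Disturbance

variable {ι κ μ : Type*} [Fintype ι] [Fintype κ] [Fintype μ] {δ : ℝ}

/-- The overlap of `φ` and `ψ` under `M`, normalised by their weights `⟨φ, M φ⟩` and `⟨ψ, M ψ⟩`, is
at most `δ`. The weights are multiplied out, so that division by a zero weight does not arise. -/
def DisturbedLE (δ : ℝ) (M : Matrix ι ι ℂ) (φ ψ : ι → ℂ) : Prop :=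
  ‖sesqForm M φ ψ‖ ≤ δ * (√(sesqForm M φ φ).re * √(sesqForm M ψ ψ).re)

theorem disturbance_nonneg {n dA dB : ℕ} (ψ : Fin n → Fin dA × Fin dB → ℂ)
    (a : Matrix (Fin dA) (Fin dA) ℂ) (b : Matrix (Fin dB) (Fin dB) ℂ) : 0 ≤ disturbance ψ a b :=
  Real.iSup_nonneg fun _ => by positivity

theorem disturbedLE_disturbance {n dA dB : ℕ} {ψ : Fin n → Fin dA × Fin dB → ℂ}
    {a : Matrix (Fin dA) (Fin dA) ℂ} {b : Matrix (Fin dB) (Fin dB) ℂ} (ha : a.PosSemidef)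
    (hb : b.PosSemidef) (hψ : ∀ i, sesqForm (a ⊗ₖ b) (ψ i) (ψ i) ≠ 0) {i j : Fin n}
    (hij : i ≠ j) : DisturbedLE (disturbance ψ a b) (a ⊗ₖ b) (ψ i) (ψ j) := by
  have hpos k := re_sesqForm_self_pos (ha.kronecker hb) (hψ k)
  rw [DisturbedLE, ← Real.sqrt_mul (hpos i).le,
    ← div_le_iff₀ (Real.sqrt_pos.2 (mul_pos (hpos i) (hpos j)))]
  exact le_ciSup (f := fun p : {q : Fin n × Fin n // q.1 ≠ q.2} =>
    ‖sesqForm (a ⊗ₖ b) (ψ p.1.1) (ψ p.1.2)‖ /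
      √((sesqForm (a ⊗ₖ b) (ψ p.1.1) (ψ p.1.1)).re * (sesqForm (a ⊗ₖ b) (ψ p.1.2) (ψ p.1.2)).re))
    (Set.finite_range _).bddAbove ⟨(i, j), hij⟩

theorem DisturbedLE.kp_swap {a b : Matrix (Fin 3) (Fin 3) ℂ} {x y x' y' : Fin 3 → ℂ}
    (h : DisturbedLE δ (a ⊗ₖ b) (kp x y) (kp x' y')) :
    DisturbedLE δ (b ⊗ₖ a) (kp y x) (kp y' x') := by
  simp only [DisturbedLE, sesqForm_kp] at h ⊢
  rwa [mul_comm (sesqForm b y y'), mul_comm (sesqForm b y y), mul_comm (sesqForm b y' y')]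

theorem DisturbedLE.of_kp {a b : Matrix (Fin 3) (Fin 3) ℂ} (ha : a.PosSemidef)
    (hb : b.PosSemidef) {x x' y : Fin 3 → ℂ} (hy : sesqForm b y y ≠ 0)
    (h : DisturbedLE δ (a ⊗ₖ b) (kp x y) (kp x' y)) : DisturbedLE δ a x x' := by
  have hpos := re_sesqForm_self_pos hb hy
  rw [DisturbedLE, re_sesqForm_kp_self ha, re_sesqForm_kp_self ha, sesqForm_kp, norm_mul,
    Real.sqrt_mul' _ hpos.le, Real.sqrt_mul' _ hpos.le] at h
  refine le_of_mul_le_mul_right ?_ hpos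
  calc ‖sesqForm a x x'‖ * (sesqForm b y y).re
      ≤ ‖sesqForm a x x'‖ * ‖sesqForm b y y‖ := by gcongr; exact Complex.re_le_norm _
    _ ≤ _ := h
    _ = δ * (√(sesqForm a x x).re * √(sesqForm a x' x').re) *
          (√(sesqForm b y y).re * √(sesqForm b y y).re) := by ring
    _ = _ := by rw [Real.mul_self_sqrt hpos.le]

theorem sum_norm_mul_sqrt_le {p : κ → ℂ} (hp : ∑ k, ‖p k‖ ^ 2 = 1) {w : κ → ℝ}
    (hw : ∀ k, 0 ≤ w k) : ∑ k, ‖p k‖ * √(w k) ≤ √(∑ k, w k) := by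
  simpa [hp, Real.sq_sqrt (hw _)] using
    Real.sum_mul_le_sqrt_mul_sqrt Finset.univ (fun k => ‖p k‖) (fun k => √(w k))

theorem norm_sesqForm_sum_smul_le {M : Matrix ι ι ℂ} (hM : M.PosSemidef) (hδ : 0 ≤ δ)
    {p : κ → ℂ} {q : μ → ℂ} (hp : ∑ k, ‖p k‖ ^ 2 = 1) (hq : ∑ l, ‖q l‖ ^ 2 = 1)
    {φ : κ → ι → ℂ} {ψ : μ → ι → ℂ} (h : ∀ k l, DisturbedLE δ M (φ k) (ψ l)) :
    ‖sesqForm M (∑ k, p k • φ k) (∑ l, q l • ψ l)‖ ≤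
      δ * (√(∑ k, (sesqForm M (φ k) (φ k)).re) * √(∑ l, (sesqForm M (ψ l) (ψ l)).re)) := by
  calc ‖sesqForm M (∑ k, p k • φ k) (∑ l, q l • ψ l)‖
      ≤ ∑ k, ∑ l, ‖p k‖ * ‖q l‖ * ‖sesqForm M (φ k) (ψ l)‖ := by
        rw [sesqForm_sum_smul]
        refine norm_sum_le_of_le _ fun k _ => norm_sum_le_of_le _ fun l _ => ?_
        rw [norm_mul, norm_mul, norm_star]
    _ ≤ ∑ k, ∑ l, ‖p k‖ * ‖q l‖ *
          (δ * (√(sesqForm M (φ k) (φ k)).re * √(sesqForm M (ψ l) (ψ l)).re)) := by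
        gcongr with k _ l _
        exact h k l
    _ = δ * ((∑ k, ‖p k‖ * √(sesqForm M (φ k) (φ k)).re) *
          ∑ l, ‖q l‖ * √(sesqForm M (ψ l) (ψ l)).re) := by
        rw [Finset.sum_mul_sum, Finset.mul_sum]
        refine Finset.sum_congr rfl fun k _ => ?_
        rw [Finset.mul_sum]
        exact Finset.sum_congr rfl fun l _ => by ring
    _ ≤ _ := by
        gcongr
        · exact sum_norm_mul_sqrt_le hp fun k => re_sesqForm_self_nonneg hM (φ k)
        · exact sum_norm_mul_sqrt_le hq fun l => re_sesqForm_self_nonneg hM (ψ l)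

/-- The vector `x` is a combination of the family `u` with `ℓ²`-normalised coefficients, and the
total weight `∑ ⟨u k, M (u k)⟩` of the family is at most `r` times the weight of `x`. This is how a
domino pair gives access to the middle basis vector `|1⟩`. -/
def Resolves (M : Matrix ι ι ℂ) (u : κ → ι → ℂ) (x : ι → ℂ) (r : ℝ) : Prop :=
  ∃ p : κ → ℂ, ∑ k, ‖p k‖ ^ 2 = 1 ∧ ∑ k, p k • u k = x ∧
    ∑ k, (sesqForm M (u k) (u k)).re ≤ r * (sesqForm M x x).re

theorem resolves_self (M : Matrix ι ι ℂ) (x : ι → ℂ) : Resolves M (fun _ : Unit => x) x 1 :=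
  ⟨1, by simp⟩

theorem sum_smul_kp (x : Fin 3 → ℂ) (p : κ → ℂ) (u : κ → Fin 3 → ℂ) :
    ∑ k, p k • kp x (u k) = kp x (∑ k, p k • u k) := by
  ext i
  simp [kp, Finset.mul_sum, mul_left_comm]

theorem sqrt_mul_sqrt_le_half_add {x y : ℝ} (hx : 0 ≤ x) (hy : 0 ≤ y) :
    √x * √y ≤ (x + y) / 2 := by
  linarith [two_mul_le_add_sq √x √y, Real.sq_sqrt hx, Real.sq_sqrt hy]

theorem norm_sesqForm_le_of_resolves {a b : Matrix (Fin 3) (Fin 3) ℂ} (ha : a.PosSemidef)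
    (hb : b.PosSemidef) (hδ : 0 ≤ δ) {x x' y : Fin 3 → ℂ} (hy : sesqForm b y y ≠ 0) {r r' : ℝ}
    (hr : 0 ≤ r) {u : κ → Fin 3 → ℂ} {v : μ → Fin 3 → ℂ} (hu : Resolves b u y r)
    (hv : Resolves b v y r') (h : ∀ k l, DisturbedLE δ (a ⊗ₖ b) (kp x (u k)) (kp x' (v l))) :
    ‖sesqForm a x x'‖ ≤ δ * √(r * r') * (((sesqForm a x x).re + (sesqForm a x' x').re) / 2) := by
  obtain ⟨p, hp, hpu, hur⟩ := hu
  obtain ⟨q, hq, hqv, hvr⟩ := hv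
  have hpos := re_sesqForm_self_pos hb hy
  have hx := re_sesqForm_self_nonneg ha x
  have hx' := re_sesqForm_self_nonneg ha x'
  have hsum := norm_sesqForm_sum_smul_le (ha.kronecker hb) hδ hp hq h
  simp only [sum_smul_kp, hpu, hqv, sesqForm_kp, norm_mul] at hsum
  simp only [← sesqForm_kp, re_sesqForm_kp_self ha, ← Finset.mul_sum] at hsum
  refine le_of_mul_le_mul_right ?_ hpos
  calc ‖sesqForm a x x'‖ * (sesqForm b y y).re
      ≤ ‖sesqForm a x x'‖ * ‖sesqForm b y y‖ := by gcongr; exact Complex.re_le_norm _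
    _ ≤ δ * (√((sesqForm a x x).re * (r * (sesqForm b y y).re)) *
          √((sesqForm a x' x').re * (r' * (sesqForm b y y).re))) := hsum.trans (by gcongr)
    _ = δ * √(r * r') * (√(sesqForm a x x).re * √(sesqForm a x' x').re) *
          (√(sesqForm b y y).re * √(sesqForm b y y).re) := by
        rw [Real.sqrt_mul hx, Real.sqrt_mul hx', Real.sqrt_mul hr, Real.sqrt_mul hr,
          Real.sqrt_mul' _ hpos.le]
        ring
    _ ≤ δ * √(r * r') * (((sesqForm a x x).re + (sesqForm a x' x').re) / 2) *
          (sesqForm b y y).re := by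
        rw [Real.mul_self_sqrt hpos.le]
        gcongr
        exact sqrt_mul_sqrt_le_half_add hx hx'

end Disturbance

section RotPair

variable {ι : Type*} [DecidableEq ι]

/-- The basis `|i⟩, |j⟩` rotated by the angle `t`: the long side of a domino. -/
noncomputable def rotPair (t : ℝ) (i j : ι) : Fin 2 → ι → ℂ :=
  ![(Real.cos t : ℂ) • Pi.single i 1 + (Real.sin t : ℂ) • Pi.single j 1,
    -(Real.sin t : ℂ) • Pi.single i 1 + (Real.cos t : ℂ) • Pi.single j 1]

theorem cos_sq_add_sin_sq_ofReal (t : ℝ) : (Real.cos t : ℂ) ^ 2 + (Real.sin t : ℂ) ^ 2 = 1 :=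
  mod_cast Real.cos_sq_add_sin_sq t

theorem cos_smul_rotPair_sub_sin_smul_rotPair (t : ℝ) (i j : ι) :
    (Real.cos t : ℂ) • rotPair t i j 0 + -(Real.sin t : ℂ) • rotPair t i j 1 = Pi.single i 1 := by
  simp only [rotPair, cons_val_zero, cons_val_one]
  calc _ = ((Real.cos t : ℂ) ^ 2 + (Real.sin t : ℂ) ^ 2) • Pi.single i 1 := by module
    _ = _ := by rw [cos_sq_add_sin_sq_ofReal, one_smul]

theorem sin_smul_rotPair_add_cos_smul_rotPair (t : ℝ) (i j : ι) :
    (Real.sin t : ℂ) • rotPair t i j 0 + (Real.cos t : ℂ) • rotPair t i j 1 = Pi.single j 1 := by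
  simp only [rotPair, cons_val_zero, cons_val_one]
  calc _ = ((Real.cos t : ℂ) ^ 2 + (Real.sin t : ℂ) ^ 2) • Pi.single j 1 := by module
    _ = _ := by rw [cos_sq_add_sin_sq_ofReal, one_smul]

variable [Fintype ι] {M : Matrix ι ι ℂ}

theorem sesqForm_smul_single_add (M : Matrix ι ι ℂ) (i j : ι) (c d c' d' : ℂ) :
    sesqForm M (c • Pi.single i 1 + d • Pi.single j 1) (c' • Pi.single i 1 + d' • Pi.single j 1) =
      star c * c' * M i i + star c * d' * M i j + (star d * c' * M j i + star d * d' * M j j) := by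
  simpa only [Fin.sum_univ_two, cons_val_zero, cons_val_one, sesqForm_single] using
    sesqForm_sum_smul M ![c, d] ![Pi.single i 1, Pi.single j 1] ![c', d']
      ![Pi.single i 1, Pi.single j 1]

theorem sum_sesqForm_rotPair (M : Matrix ι ι ℂ) (t : ℝ) (i j : ι) :
    ∑ k, sesqForm M (rotPair t i j k) (rotPair t i j k) = M i i + M j j := by
  simp only [Fin.sum_univ_two, rotPair, cons_val_zero, cons_val_one, sesqForm_smul_single_add,
    star_neg, RCLike.star_def, Complex.conj_ofReal]
  linear_combination (M i i + M j j) * cos_sq_add_sin_sq_ofReal t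

theorem two_mul_sesqForm_rotPair (M : Matrix ι ι ℂ) (t : ℝ) (i j : ι) :
    2 * sesqForm M (rotPair t i j 0) (rotPair t i j 1) =
      Real.sin (2 * t) * (M j j - M i i) + (M i j - M j i) +
        Real.cos (2 * t) * (M i j + M j i) := by
  simp only [rotPair, cons_val_zero, cons_val_one, sesqForm_smul_single_add,
    RCLike.star_def, Complex.conj_ofReal, Real.sin_two_mul, Real.cos_two_mul, Complex.ofReal_mul,
    Complex.ofReal_sub, Complex.ofReal_pow, Complex.ofReal_ofNat, Complex.ofReal_one]
  linear_combination (-2 * M j i) * cos_sq_add_sin_sq_ofReal t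

theorem two_mul_re_sesqForm_rotPair (hM : M.PosSemidef) (t : ℝ) (i j : ι) :
    2 * (sesqForm M (rotPair t i j 0) (rotPair t i j 1)).re =
      Real.sin (2 * t) * ((M j j).re - (M i i).re) + 2 * Real.cos (2 * t) * (M i j).re := by
  have hji : (M j i).re = (M i j).re := by
    rw [← hM.isHermitian.apply i j, RCLike.star_def, Complex.conj_re]
  have h := congrArg Complex.re (two_mul_sesqForm_rotPair M t i j)
  rw [← Complex.ofReal_ofNat] at h
  simp only [Complex.add_re, Complex.sub_re, Complex.re_ofReal_mul, hji] at h
  linarith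

theorem re_sum_sesqForm_rotPair (M : Matrix ι ι ℂ) (t : ℝ) (i j : ι) :
    ∑ k, (sesqForm M (rotPair t i j k) (rotPair t i j k)).re = (M i i).re + (M j j).re := by
  rw [← Complex.re_sum, sum_sesqForm_rotPair, Complex.add_re]

theorem resolves_rotPair_left (t : ℝ) {i j : ι} {s : ℝ} (hs : 1 ≤ s) (hM : M.PosSemidef)
    (hj : (M j j).re ≤ s * (M i i).re) :
    Resolves M (rotPair t i j) (Pi.single i 1) (2 * s) := by
  refine ⟨![Real.cos t, -Real.sin t], ?_, ?_, ?_⟩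
  · simp [Fin.sum_univ_two, -Complex.ofReal_cos, -Complex.ofReal_sin]
  · simpa [Fin.sum_univ_two] using cos_smul_rotPair_sub_sin_smul_rotPair t i j
  · rw [re_sum_sesqForm_rotPair, sesqForm_single]
    nlinarith [re_diag_nonneg hM i]

theorem resolves_rotPair_right (t : ℝ) {i j : ι} {s : ℝ} (hs : 1 ≤ s) (hM : M.PosSemidef)
    (hi : (M i i).re ≤ s * (M j j).re) :
    Resolves M (rotPair t i j) (Pi.single j 1) (2 * s) := by
  refine ⟨![Real.sin t, Real.cos t], ?_, ?_, ?_⟩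
  · simp [Fin.sum_univ_two, -Complex.ofReal_cos, -Complex.ofReal_sin]
  · simpa [Fin.sum_univ_two] using sin_smul_rotPair_add_cos_smul_rotPair t i j
  · rw [re_sum_sesqForm_rotPair, sesqForm_single]
    nlinarith [re_diag_nonneg hM j]

theorem two_mul_norm_sesqForm_rotPair_le {δ t : ℝ} {i j : ι} (hM : M.PosSemidef) (hδ : 0 ≤ δ)
    (h : DisturbedLE δ M (rotPair t i j 0) (rotPair t i j 1)) :
    2 * ‖sesqForm M (rotPair t i j 0) (rotPair t i j 1)‖ ≤ δ * ((M i i).re + (M j j).re) := by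
  have hamgm := sqrt_mul_sqrt_le_half_add (re_sesqForm_self_nonneg hM (rotPair t i j 0))
    (re_sesqForm_self_nonneg hM (rotPair t i j 1))
  rw [← Fin.sum_univ_two (fun k => (sesqForm M (rotPair t i j k) (rotPair t i j k)).re),
    re_sum_sesqForm_rotPair] at hamgm
  linarith [h.trans (mul_le_mul_of_nonneg_left hamgm hδ)]

theorem abs_sin_mul_abs_diag_sub_le {δ t : ℝ} {i j : ι} (hM : M.PosSemidef) (hδ : 0 ≤ δ)
    (h : DisturbedLE δ M (rotPair t i j 0) (rotPair t i j 1)) :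
    |Real.sin (2 * t)| * |(M i i).re - (M j j).re| ≤
      δ * ((M i i).re + (M j j).re) + 2 * ‖M i j‖ := by
  set z := sesqForm M (rotPair t i j 0) (rotPair t i j 1)
  have hz : 2 * ‖z‖ ≤ δ * ((M i i).re + (M j j).re) := two_mul_norm_sesqForm_rotPair_le hM hδ h
  calc |Real.sin (2 * t)| * |(M i i).re - (M j j).re|
      = |2 * Real.cos (2 * t) * (M i j).re - 2 * z.re| := by
        rw [← abs_mul, two_mul_re_sesqForm_rotPair hM]
        ring_nf
    _ ≤ 2 * |Real.cos (2 * t)| * |(M i j).re| + 2 * |z.re| := by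
        refine (abs_sub _ _).trans_eq ?_
        simp only [abs_mul, abs_two]
    _ ≤ 2 * 1 * ‖M i j‖ + 2 * ‖z‖ := by
        gcongr
        exacts [Real.abs_cos_le_one _, Complex.abs_re_le_norm _, Complex.abs_re_le_norm _]
    _ ≤ δ * ((M i i).re + (M j j).re) + 2 * ‖M i j‖ := by linarith

theorem abs_diag_sub_le {δ σ t L : ℝ} {i j : ι} (hM : M.PosSemidef) (hδ : 0 ≤ δ) (hσ : 0 < σ)
    (hσt : σ ≤ |Real.sin (2 * t)|) (h : DisturbedLE δ M (rotPair t i j 0) (rotPair t i j 1))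
    (hij : ‖M i j‖ ≤ L * (((M i i).re + (M j j).re) / 2)) :
    |(M i i).re - (M j j).re| ≤ (δ + L) / σ * ((M i i).re + (M j j).re) := by
  rw [div_mul_eq_mul_div, le_div_iff₀' hσ]
  calc σ * |(M i i).re - (M j j).re| ≤ |Real.sin (2 * t)| * |(M i i).re - (M j j).re| := by gcongr
    _ ≤ δ * ((M i i).re + (M j j).re) + 2 * ‖M i j‖ := abs_sin_mul_abs_diag_sub_le hM hδ h
    _ ≤ (δ + L) * ((M i i).re + (M j j).re) := by linarith

end RotPair

section Domino

theorem maxEntry_trace_inv_smul_sub_le {n : Type*} [Fintype n] [DecidableEq n] {M : Matrix n n ℂ}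
    {c r : ℝ} (hM : M.PosSemidef) (htr : 0 < M.trace.re) (hr : 0 ≤ r)
    (hdiag : ∀ i, |(M i i).re - c * M.trace.re| ≤ r * M.trace.re)
    (hoff : ∀ i j, i ≠ j → ‖M i j‖ ≤ r * M.trace.re) :
    maxEntry (M.trace⁻¹ • M - (c : ℂ) • (1 : Matrix n n ℂ)) ≤ r := by
  refine maxEntry_le hr fun i j => ?_
  have htr' : (M.trace.re : ℂ) ≠ 0 := mod_cast htr.ne'
  rw [Matrix.sub_apply, Matrix.smul_apply, Matrix.smul_apply, smul_eq_mul, smul_eq_mul,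
    ← ofReal_re_trace hM]
  rcases eq_or_ne i j with rfl | hij
  · rw [one_apply_eq, ← ofReal_re_diag hM,
      show ((M.trace.re : ℂ))⁻¹ * (M i i).re - c * 1 =
        (((M i i).re - c * M.trace.re) / M.trace.re : ℝ) by push_cast; field_simp,
      Complex.norm_real, Real.norm_eq_abs, abs_div, abs_of_pos htr, div_le_iff₀ htr]
    exact hdiag i
  · rw [one_apply_ne hij, mul_zero, sub_zero, norm_mul, norm_inv, Complex.norm_of_nonneg htr.le,
      inv_mul_le_iff₀' htr]
    exact hoff i j hij

theorem maxEntry_trace_inv_smul_sub_third_le {K : ℝ} {a : Matrix (Fin 3) (Fin 3) ℂ}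
    (ha : a.PosSemidef) (htr : 0 < a.trace.re) (hK : 0 ≤ K)
    (hd₀₁ : |(a 0 0).re - (a 1 1).re| ≤ K * ((a 0 0).re + (a 1 1).re))
    (hd₁₂ : |(a 1 1).re - (a 2 2).re| ≤ K * ((a 1 1).re + (a 2 2).re))
    (h₀₁ : ‖a 0 1‖ ≤ K * ((a 0 0).re + (a 1 1).re))
    (h₁₂ : ‖a 1 2‖ ≤ K * ((a 1 1).re + (a 2 2).re))
    (h₀₂ : ‖a 0 2‖ ≤ K * ((a 0 0).re + (a 2 2).re)) :
    maxEntry (a.trace⁻¹ • a - ((3⁻¹ : ℝ) : ℂ) • (1 : Matrix (Fin 3) (Fin 3) ℂ)) ≤ K := by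
  have htrace : a.trace.re = (a 0 0).re + (a 1 1).re + (a 2 2).re := by
    rw [Matrix.trace_fin_three, Complex.add_re, Complex.add_re]
  have hKa i := mul_nonneg hK (re_diag_nonneg ha i)
  have hK₀ := hKa 0
  have hK₁ := hKa 1
  have hK₂ := hKa 2
  refine maxEntry_trace_inv_smul_sub_le ha htr hK (fun i => ?_) fun i j hij => ?_
  · rw [abs_le] at hd₀₁ hd₁₂ ⊢
    rw [htrace]
    fin_cases i <;> constructor <;> dsimp <;> linarith
  · have hsymm := norm_apply_comm ha
    rw [htrace]
    fin_cases i <;> fin_cases j <;> first | exact absurd rfl hij | skip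
    all_goals first | (dsimp; linarith) | (rw [hsymm]; dsimp; linarith)

theorem maxEntry_trace_inv_smul_sub_third_le_of_disturbedLE {δ σ L t t' : ℝ}
    {a : Matrix (Fin 3) (Fin 3) ℂ} (ha : a.PosSemidef) (htr : 0 < a.trace.re) (hδ : 0 ≤ δ)
    (hL : 0 ≤ L) (hσ : 0 < σ) (hσt : σ ≤ |Real.sin (2 * t)|) (hσt' : σ ≤ |Real.sin (2 * t')|)
    (hd₀₁ : DisturbedLE δ a (rotPair t 0 1 0) (rotPair t 0 1 1))
    (hd₁₂ : DisturbedLE δ a (rotPair t' 1 2 0) (rotPair t' 1 2 1))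
    (h₀₁ : ‖a 0 1‖ ≤ L * (((a 0 0).re + (a 1 1).re) / 2))
    (h₁₂ : ‖a 1 2‖ ≤ L * (((a 1 1).re + (a 2 2).re) / 2))
    (h₀₂ : ‖a 0 2‖ ≤ L * ((a 0 0).re + (a 2 2).re)) :
    maxEntry (a.trace⁻¹ • a - ((3⁻¹ : ℝ) : ℂ) • (1 : Matrix (Fin 3) (Fin 3) ℂ)) ≤
      (δ + L) / σ := by
  have hσ_one : σ ≤ 1 := hσt.trans (Real.abs_sin_le_one _)
  have hLK : L ≤ (δ + L) / σ := by
    rw [le_div_iff₀ hσ]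
    nlinarith
  have hweight := re_diag_add_re_diag_nonneg ha
  have hoff {i j} (h : ‖a i j‖ ≤ L * ((a i i).re + (a j j).re)) :
      ‖a i j‖ ≤ (δ + L) / σ * ((a i i).re + (a j j).re) :=
    h.trans (mul_le_mul_of_nonneg_right hLK (hweight i j))
  have hhalf {i j} (h : ‖a i j‖ ≤ L * (((a i i).re + (a j j).re) / 2)) :
      ‖a i j‖ ≤ L * ((a i i).re + (a j j).re) :=
    h.trans (mul_le_mul_of_nonneg_left (half_le_self (hweight i j)) hL)
  exact maxEntry_trace_inv_smul_sub_third_le ha htr (by positivity)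
    (abs_diag_sub_le ha hδ hσ hσt hd₀₁ h₀₁) (abs_diag_sub_le ha hδ hσ hσt' hd₁₂ h₁₂)
    (hoff (hhalf h₀₁)) (hoff (hhalf h₁₂)) (hoff h₀₂)

theorem maxEntry_marginal_sub_le {δ σ s t t' : ℝ} {a b : Matrix (Fin 3) (Fin 3) ℂ}
    {u v : Fin 2 → Fin 3 → ℂ} (ha : a.PosSemidef) (hb : b.PosSemidef) (htr : 0 < a.trace.re)
    (hb₁ : b 1 1 ≠ 0) (hδ : 0 ≤ δ) (hs : 1 ≤ s) (hσ : 0 < σ) (hσt : σ ≤ |Real.sin (2 * t)|)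
    (hσt' : σ ≤ |Real.sin (2 * t')|)
    (hu : Resolves b u (Pi.single 1 1) (2 * s)) (hv : Resolves b v (Pi.single 1 1) (2 * s))
    (h₁u : ∀ k, DisturbedLE δ (a ⊗ₖ b) (kp (Pi.single 1 1) (Pi.single 1 1))
      (kp (Pi.single 0 1) (u k)))
    (h₁v : ∀ l, DisturbedLE δ (a ⊗ₖ b) (kp (Pi.single 1 1) (Pi.single 1 1))
      (kp (Pi.single 2 1) (v l)))
    (huv : ∀ k l, DisturbedLE δ (a ⊗ₖ b) (kp (Pi.single 0 1) (u k)) (kp (Pi.single 2 1) (v l)))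
    (hd₀₁ : DisturbedLE δ a (rotPair t 0 1 0) (rotPair t 0 1 1))
    (hd₁₂ : DisturbedLE δ a (rotPair t' 1 2 0) (rotPair t' 1 2 1)) :
    maxEntry (a.trace⁻¹ • a - ((3⁻¹ : ℝ) : ℂ) • (1 : Matrix (Fin 3) (Fin 3) ℂ)) ≤
      (1 + √2 * s) * δ / σ := by
  have hone := resolves_self b (Pi.single 1 1)
  rw [← sesqForm_single b] at hb₁
  have h₀₁ := norm_sesqForm_le_of_resolves ha hb hδ hb₁ zero_le_one hone hu fun _ => h₁u
  have h₁₂ := norm_sesqForm_le_of_resolves ha hb hδ hb₁ zero_le_one hone hv fun _ => h₁v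
  have h₀₂ := norm_sesqForm_le_of_resolves ha hb hδ hb₁ (by positivity) hu hv huv
  simp only [sesqForm_single, one_mul, Real.sqrt_mul_self (show 0 ≤ 2 * s by positivity)]
    at h₀₁ h₁₂ h₀₂
  rw [norm_apply_comm ha, add_comm (a 1 1).re] at h₀₁
  have hsqrt : √(2 * s) ≤ √2 * s := by
    rw [Real.sqrt_mul zero_le_two]
    gcongr
    exact Real.sqrt_le_iff.2 ⟨by linarith, by nlinarith⟩
  have hs_le : s ≤ √2 * s := le_mul_of_one_le_left (by positivity) (Real.one_le_sqrt.2 one_le_two)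
  have hweight := re_diag_add_re_diag_nonneg ha
  rw [one_add_mul, mul_comm (√2 * s)]
  refine maxEntry_trace_inv_smul_sub_third_le_of_disturbedLE ha htr hδ (by positivity) hσ hσt hσt'
    hd₀₁ hd₁₂ (h₀₁.trans ?_) (h₁₂.trans ?_) (h₀₂.trans ?_)
  · have := hweight 0 1
    gcongr
  · have := hweight 1 2
    gcongr
  · rw [mul_assoc, mul_assoc δ, mul_assoc 2, mul_left_comm 2, mul_div_cancel₀ _ two_ne_zero]
    have := hweight 0 2
    gcongr

theorem e3_eq_single (i : Fin 3) : e3 i = Pi.single i 1 := by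
  ext k
  simp [e3, Pi.single_apply]

theorem rotDomino_eq (t₁ t₂ t₃ t₄ : ℝ) :
    rotDomino t₁ t₂ t₃ t₄ =
      ![kp (Pi.single 1 1) (Pi.single 1 1),
        kp (Pi.single 0 1) (rotPair t₁ 0 1 0), kp (Pi.single 0 1) (rotPair t₁ 0 1 1),
        kp (Pi.single 2 1) (rotPair t₂ 1 2 0), kp (Pi.single 2 1) (rotPair t₂ 1 2 1),
        kp (rotPair t₃ 1 2 0) (Pi.single 0 1), kp (rotPair t₃ 1 2 1) (Pi.single 0 1),
        kp (rotPair t₄ 0 1 0) (Pi.single 2 1), kp (rotPair t₄ 0 1 1) (Pi.single 2 1)] := by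
  simp only [rotPair, ← e3_eq_single]
  rfl

theorem sesqForm_ne_zero_of_kp {a b : Matrix (Fin 3) (Fin 3) ℂ} {x y : Fin 3 → ℂ}
    (h : sesqForm (a ⊗ₖ b) (kp x y) (kp x y) ≠ 0) : sesqForm a x x ≠ 0 ∧ sesqForm b y y ≠ 0 :=
  mul_ne_zero_iff.1 (sesqForm_kp a b x y x y ▸ h)

theorem re_diag_le_mul_of_opNorm_le {n : ℕ} {M : Matrix (Fin n) (Fin n) ℂ} {s : ℝ} (hs : 0 < s)
    {j : Fin n} (h : 1 / s * opNorm M ≤ (M j j).re) (i : Fin n) :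
    (M i i).re ≤ s * (M j j).re := by
  rw [one_div, inv_mul_le_iff₀ hs] at h
  exact (re_diag_le_opNorm M i).trans h

end Domino

theorem stmt13_general {t₁ t₂ t₃ t₄ σ s : ℝ} {a b : Matrix (Fin 3) (Fin 3) ℂ}
    (ha : a.PosSemidef) (hb : b.PosSemidef)
    (hψ : ∀ i, star (rotDomino t₁ t₂ t₃ t₄ i) ⬝ᵥ (a ⊗ₖ b).mulVec (rotDomino t₁ t₂ t₃ t₄ i) ≠ 0)
    (hσ : 0 < σ) (h₁ : σ ≤ |Real.sin (2 * t₁)|) (h₂ : σ ≤ |Real.sin (2 * t₂)|)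
    (h₃ : σ ≤ |Real.sin (2 * t₃)|) (h₄ : σ ≤ |Real.sin (2 * t₄)|)
    (has : ∀ i, (a i i).re ≤ s * (a 1 1).re) (hbs : ∀ i, (b i i).re ≤ s * (b 1 1).re) :
    maxEntry ((a ⊗ₖ b).trace⁻¹ • (a ⊗ₖ b) -
        (9 : ℂ)⁻¹ • (1 : Matrix (Fin 3 × Fin 3) (Fin 3 × Fin 3) ℂ)) ≤
      4 / 3 * ((1 + √2 * s) * disturbance (rotDomino t₁ t₂ t₃ t₄) a b / σ) := by
  have hδ := disturbance_nonneg (rotDomino t₁ t₂ t₃ t₄) a b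
  have h i j (hij : i ≠ j) := disturbedLE_disturbance ha hb hψ hij
  generalize disturbance (rotDomino t₁ t₂ t₃ t₄) a b = δ at *
  rw [rotDomino_eq] at hψ h
  obtain ⟨ha₁, hb₁⟩ := sesqForm_ne_zero_of_kp (hψ 0)
  have hapos := re_sesqForm_self_pos ha ha₁
  have hbpos := re_sesqForm_self_pos hb hb₁
  rw [sesqForm_single] at ha₁ hb₁ hapos hbpos
  have hs : 1 ≤ s := le_of_mul_le_mul_right (by rw [one_mul]; exact has 1) hapos
  have hA := maxEntry_marginal_sub_le ha hb (hapos.trans_le (re_diag_le_re_trace ha 1)) hb₁ hδ hs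
    hσ h₄ h₃ (resolves_rotPair_right t₁ hs hb (hbs 0)) (resolves_rotPair_left t₂ hs hb (hbs 2))
    (Fin.forall_fin_two.2 ⟨h 0 1 (by decide), h 0 2 (by decide)⟩)
    (Fin.forall_fin_two.2 ⟨h 0 3 (by decide), h 0 4 (by decide)⟩)
    (Fin.forall_fin_two.2 ⟨Fin.forall_fin_two.2 ⟨h 1 3 (by decide), h 1 4 (by decide)⟩,
      Fin.forall_fin_two.2 ⟨h 2 3 (by decide), h 2 4 (by decide)⟩⟩)
    ((h 7 8 (by decide)).of_kp ha hb (sesqForm_ne_zero_of_kp (hψ 7)).2)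
    ((h 5 6 (by decide)).of_kp ha hb (sesqForm_ne_zero_of_kp (hψ 5)).2)
  have hB := maxEntry_marginal_sub_le hb ha (hbpos.trans_le (re_diag_le_re_trace hb 1)) ha₁ hδ hs
    hσ h₁ h₂ (resolves_rotPair_left t₃ hs ha (has 2)) (resolves_rotPair_right t₄ hs ha (has 0))
    (Fin.forall_fin_two.2 ⟨(h 0 5 (by decide)).kp_swap, (h 0 6 (by decide)).kp_swap⟩)
    (Fin.forall_fin_two.2 ⟨(h 0 7 (by decide)).kp_swap, (h 0 8 (by decide)).kp_swap⟩)
    (Fin.forall_fin_two.2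
      ⟨Fin.forall_fin_two.2 ⟨(h 5 7 (by decide)).kp_swap, (h 5 8 (by decide)).kp_swap⟩,
      Fin.forall_fin_two.2 ⟨(h 6 7 (by decide)).kp_swap, (h 6 8 (by decide)).kp_swap⟩⟩)
    ((h 1 2 (by decide)).kp_swap.of_kp hb ha (sesqForm_ne_zero_of_kp (hψ 1)).1)
    ((h 3 4 (by decide)).kp_swap.of_kp hb ha (sesqForm_ne_zero_of_kp (hψ 3)).1)
  convert maxEntry_trace_inv_smul_kronecker_sub_le ha hA hB using 2 <;> norm_num

/-- For the rotated domino states `S₃(θ)` and any `s > 0`: if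
`a₁₁ ≥ (1/s)·‖a‖_∞` and `b₁₁ ≥ (1/s)·‖b‖_∞`, then
`‖(a⊗b)/tr(a⊗b) − I/9‖_max ≤ 8(1+√2·s)·δ/sin 2θ`. -/
theorem stmt13
    (th : ℝ) (hth : 0 < th ∧ th ≤ Real.pi / 4)
    (a b : Matrix (Fin 3) (Fin 3) ℂ) (ha : a.PosSemidef) (hb : b.PosSemidef)
    (hnz : ∀ i, star (rotDomino th th th th i) ⬝ᵥ
      (a ⊗ₖ b).mulVec (rotDomino th th th th i) ≠ 0)
    (s : ℝ) (hs : 0 < s)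
    (ha11 : (a 1 1).re ≥ (1 / s) * opNorm a)
    (hb11 : (b 1 1).re ≥ (1 / s) * opNorm b) :
    maxEntry (((a ⊗ₖ b).trace)⁻¹ • (a ⊗ₖ b) -
        ((9 : ℂ))⁻¹ • (1 : Matrix (Fin 3 × Fin 3) (Fin 3 × Fin 3) ℂ)) ≤
      8 * (1 + Real.sqrt 2 * s) * disturbance (rotDomino th th th th) a b /
        Real.sin (2 * th) := by
  have hσ : 0 < Real.sin (2 * th) :=
    Real.sin_pos_of_pos_of_lt_pi (by linarith) (by linarith [Real.pi_pos])
  have hδ := disturbance_nonneg (rotDomino th th th th) a b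
  have hsin := le_abs_self (Real.sin (2 * th))
  calc _ ≤ _ := stmt13_general ha hb hnz hσ hsin hsin hsin hsin
        (re_diag_le_mul_of_opNorm_le hs ha11) (re_diag_le_mul_of_opNorm_le hs hb11)
    _ ≤ 8 * ((1 + √2 * s) * disturbance (rotDomino th th th th) a b / Real.sin (2 * th)) := by
        gcongr
        norm_num
    _ = _ := by ring
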